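/- The set of C∞-words over {1,2} is cube-free: there is no nonempty word w over {1,2} such that www is a C∞-word. -/

import Mathlib

/-!
A word with period `p ≥ 4` and length at least `3 * p - 5` is never a C∞-word (`no_long_period`);
cubes of words of length at most `3` are excluded by computing at most three derivatives.

The first fact is an infinite descent on `p`. Let `x` be a C∞-word with period `p` and length
`L ≥ 3 * p - 5`, and let `y = D x`. Up to at most one letter dropped at either end, the letters
of `y` are the gaps between consecutive positions at which `x` changes letter (`exists_isDer`).
These positions are shifted onto each other by `p`, so `y` has a period `q`, where `q` is the
number of runs of `x` in a window of length `p`; as `x` is binary, `q` is even.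

Since `y` is itself a C∞-word, it contains no factor `aaa` (`no_triple`). This forces `4 ≤ q < p`:
`q = p` would give `111` in `y`, and `q = 2` would give `p = 4` and `222` in `y`.
Finally `y` has length at least `3 * q - 5`. Otherwise at least six letters are missing from three
full periods of `y`, while the letters missing from three full periods of `x`, together with the
two dropped ones, number at most `5 + 2 = 7`. So six consecutive letters `1` or `2` have sum at
most `7`, and `111` occurs among them. Hence `y` is a smaller counterexample.
-/

namespace Kola

/-- Run-length encoding of a finite word as (letter, count) pairs. -/
def rle : List ℕ → List (ℕ × ℕ)
  | [] => []
  | a :: l =>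
    match rle l with
    | [] => [(a, 1)]
    | (b, n) :: t => if a = b then (b, n + 1) :: t else (a, 1) :: (b, n) :: t

/-- Boundary adjustment for the first run: discard if length ≤ r, extend to s if length in (r,s]. -/
def fixRun (r s : ℕ) : List (ℕ × ℕ) → List (ℕ × ℕ)
  | [] => []
  | (a, n) :: t => if n ≤ r then t else if n ≤ s then (a, s) :: t else (a, n) :: t

/-- The Kolakoski derivative over the alphabet {r,s}. -/
def D (r s : ℕ) (w : List ℕ) : List ℕ :=
  match rle w with
  | [] => []
  | [(_, n)] => if n < s then [] else [n]
  | ps => ((fixRun r s ((fixRun r s ps).reverse)).reverse).map Prod.snd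

/-- A C∞-word over {r,s}: all iterated derivatives are words over {r,s}. -/
def IsCInf (r s : ℕ) (w : List ℕ) : Prop :=
  ∀ k : ℕ, ∀ a ∈ (D r s)^[k] w, a = r ∨ a = s

/-- `t` enumerates the starting indices of the (maximal) runs of the sequence `z`. -/
def IsRunPartition (z : ℕ → ℕ) (t : ℕ → ℕ) : Prop :=
  t 0 = 0 ∧ StrictMono t ∧
  (∀ k i, t k ≤ i → i < t (k + 1) → z i = z (t k)) ∧
  (∀ k, z (t (k + 1)) ≠ z (t k))

/-- `w` is the run-length sequence of `z`. -/
def IsRunLengthSeq (z w : ℕ → ℕ) : Prop :=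
  ∃ t, IsRunPartition z t ∧ ∀ k, w k = t (k + 1) - t k

/-- A Kolakoski sequence over {r,s}: a sequence over {r,s} equal to its own run-length sequence. -/
def IsKolakoski (r s : ℕ) (z : ℕ → ℕ) : Prop :=
  (∀ n, z n = r ∨ z n = s) ∧ IsRunLengthSeq z z

def EventuallyPeriodic (z : ℕ → ℕ) : Prop :=
  ∃ m q : ℕ, 1 ≤ q ∧ ∀ i, m ≤ i → z (i + q) = z i

/-- `w` occurs as a factor of the infinite sequence `z`. -/
def FactorOf (w : List ℕ) (z : ℕ → ℕ) : Prop :=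
  ∃ i, w = (List.range w.length).map fun k => z (i + k)

/-- Letter-exchange on words over {r,s}. -/
def exch (r s : ℕ) (w : List ℕ) : List ℕ := w.map fun a => if a = r then s else r

/-- Number of occurrences of `w` as a factor of the prefix of length `n` of `z`. -/
def countOcc (z : ℕ → ℕ) (w : List ℕ) (n : ℕ) : ℕ :=
  ((Finset.range n).filter fun i => i + w.length ≤ n ∧ ∀ k < w.length, z (i + k) = w.getD k 0).card

/-- All words of length n over {r,s}. -/
def allWords (r s : ℕ) : ℕ → Finset (List ℕ)
  | 0 => {[]}
  | n + 1 => (allWords r s n).image (List.cons r) ∪ (allWords r s n).image (List.cons s)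


/-- `y` records the gaps between consecutive letter changes of `x`: the runs of `x` described by
`y` are delimited by the positions `T 0 < T 1 < ⋯ < T y.length`, and `e` letters at the left and
`f` letters at the right of `x` (at most one on each side) are left over. Letters are read with
default value `0`. The fields `left` and `right` say that an outermost run of `x` is recorded only
if it has length at least `2`. -/
structure IsDer (x y : List ℕ) (e f : ℕ) (T : ℕ → ℕ) : Prop where
  zero : T 0 = e
  step : ∀ j < y.length, T (j + 1) = T j + y.getD j 0
  mono : Monotone T
  last : T y.length + f = x.length
  he : e ≤ 1
  hf : f ≤ 1
  bd : ∀ i, i + 1 < x.length →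
    (x.getD (i + 1) 0 ≠ x.getD i 0 ↔ ∃ j ≤ y.length, T j = i + 1)
  left : e = 0 → 0 < y.length → 2 ≤ y.getD 0 0
  right : f = 0 → 0 < y.length → 2 ≤ y.getD (y.length - 1) 0

/-! ### Run-length encoding and the derivative -/

theorem rle_cons (a : ℕ) (l : List ℕ) : ∃ n t, rle (a :: l) = (a, n + 1) :: t := by
  rw [rle]
  rcases h : rle l with _ | ⟨⟨b, n⟩, t⟩
  · exact ⟨0, [], rfl⟩
  · by_cases hab : a = b
    · subst hab; exact ⟨n, t, by simp⟩
    · exact ⟨0, (b, n) :: t, by simp [hab]⟩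

/-- The runs given by `rle` are nonempty, exhaust the word, and end exactly at the letter
changes. -/
theorem rle_spec (x : List ℕ) :
    (∀ n ∈ (rle x).map Prod.snd, 0 < n) ∧ ((rle x).map Prod.snd).sum = x.length ∧
    ∀ i, i + 1 < x.length → (x.getD (i + 1) 0 ≠ x.getD i 0 ↔
      ∃ j, (((rle x).map Prod.snd).take j).sum = i + 1) := by
  induction x with
  | nil => simp [rle]
  | cons a l ih =>
    rcases l with _ | ⟨c, l⟩
    · simp [rle]
    obtain ⟨n, t, ht⟩ := rle_cons c l
    rw [rle]
    rw [ht] at ih ⊢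
    obtain ⟨h1, h2, h3⟩ := ih
    simp only [List.map_cons, List.mem_cons, forall_eq_or_imp, List.sum_cons,
      List.length_cons] at h1 h2 h3
    by_cases hac : a = c
    · subst hac
      simp only [if_true, List.map_cons, List.mem_cons, forall_eq_or_imp, List.sum_cons,
        List.length_cons]
      refine ⟨⟨by omega, h1.2⟩, by omega, ?_⟩
      rintro (_ | i) hi
      · simp only [List.getD_cons_succ, List.getD_cons_zero, ne_eq, not_true, false_iff]
        rintro ⟨_ | j, hj⟩
        · simp at hj
        · rw [List.take_succ_cons, List.sum_cons] at hj
          omega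
      · have := h3 i (by omega)
        refine this.trans ?_
        constructor
        · rintro ⟨_ | j, hj⟩
          · simp at hj
          · refine ⟨j + 1, ?_⟩
            simp only [List.take_succ_cons, List.sum_cons] at hj ⊢
            omega
        · rintro ⟨_ | j, hj⟩
          · simp at hj
          · refine ⟨j + 1, ?_⟩
            simp only [List.take_succ_cons, List.sum_cons] at hj ⊢
            omega
    · simp only [if_neg hac, List.map_cons, List.mem_cons, forall_eq_or_imp, List.sum_cons,
        List.length_cons]
      refine ⟨⟨by omega, by omega, h1.2⟩, by omega, ?_⟩
      rintro (_ | i) hi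
      · simp only [List.getD_cons_succ, List.getD_cons_zero]
        refine ⟨fun _ => ⟨1, by simp⟩, fun _ => Ne.symm hac⟩
      · have := h3 i (by omega)
        refine this.trans ?_
        constructor
        · rintro ⟨j, hj⟩
          refine ⟨j + 1, ?_⟩
          rw [List.take_succ_cons, List.sum_cons, hj]
          omega
        · rintro ⟨_ | j, hj⟩
          · simp at hj
          · refine ⟨j, ?_⟩
            rw [List.take_succ_cons, List.sum_cons] at hj
            omega

/-- On runs of positive length, the derivative just drops an outermost run of length one. -/
theorem D_spec (x : List ℕ) :
    ∃ e f : ℕ, e ≤ 1 ∧ f ≤ 1 ∧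
      (rle x).map Prod.snd = List.replicate e 1 ++ D 1 2 x ++ List.replicate f 1 ∧
      (e = 0 → 0 < (D 1 2 x).length → 2 ≤ (D 1 2 x).getD 0 0) ∧
      (f = 0 → 0 < (D 1 2 x).length → 2 ≤ (D 1 2 x).getD ((D 1 2 x).length - 1) 0) := by
  have hpos := (rle_spec x).1
  rw [D]
  rcases h : rle x with _ | ⟨⟨a, n⟩, t⟩
  · exact ⟨0, 0, by simp⟩
  rw [h] at hpos
  rcases List.eq_nil_or_concat t with rfl | ⟨u, ⟨b, m⟩, rfl⟩
  · have hn : 0 < n := hpos n (by simp)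
    by_cases h2 : n < 2
    · obtain rfl : n = 1 := by omega
      exact ⟨1, 0, by simp⟩
    · exact ⟨0, 0, by simp [h2]; omega⟩
  have hn : 0 < n := hpos n (by simp)
  have hm : 0 < m := hpos m (by simp)
  have key : ((fixRun 1 2 ((fixRun 1 2 ((a, n) :: (u ++ [(b, m)]))).reverse)).reverse).map Prod.snd
      = (if n ≤ 1 then [] else [n]) ++ u.map Prod.snd ++ (if m ≤ 1 then [] else [m]) := by
    by_cases h1 : n ≤ 1 <;> by_cases h2 : m ≤ 1 <;> by_cases h3 : n ≤ 2 <;>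
      by_cases h4 : m ≤ 2 <;> simp [fixRun, h1, h2, h3, h4] <;> omega
  have hm' : (match (a, n) :: (u.concat (b, m)) with
      | [] => []
      | [(_, n)] => if n < 2 then [] else [n]
      | ps => ((fixRun 1 2 ((fixRun 1 2 ps).reverse)).reverse).map Prod.snd)
      = (if n ≤ 1 then [] else [n]) ++ u.map Prod.snd ++ (if m ≤ 1 then [] else [m]) := by
    rw [← key, List.concat_eq_append]
    rcases u with _ | ⟨c, u⟩ <;> rfl
  rw [hm']
  refine ⟨if n ≤ 1 then 1 else 0, if m ≤ 1 then 1 else 0, by split_ifs <;> omega,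
    by split_ifs <;> omega, ?_, ?_, ?_⟩
  · by_cases h1 : n ≤ 1 <;> by_cases h2 : m ≤ 1 <;> simp [h1, h2] <;> omega
  · by_cases h1 : n ≤ 1 <;> simp [h1]
    omega
  · by_cases h2 : m ≤ 1
    · simp [h2]
    · simp [h2]
      omega

theorem sum_take_succ' (y : List ℕ) (j : ℕ) :
    (y.take (j + 1)).sum = (y.take j).sum + y.getD j 0 := by
  induction y generalizing j with
  | nil => simp
  | cons a y ih =>
    rcases j with _ | j
    · simp
    · rw [List.take_succ_cons, List.sum_cons, ih, List.take_succ_cons, List.sum_cons,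
        List.getD_cons_succ]
      omega

theorem exists_isDer (x : List ℕ) : ∃ e f T, IsDer x (D 1 2 x) e f T := by
  obtain ⟨e, f, he, hf, hrle, hl, hr⟩ := D_spec x
  obtain ⟨-, hsum, hbd⟩ := rle_spec x
  rw [hrle] at hsum hbd
  generalize D 1 2 x = y at *
  have hsum' : e + y.sum + f = x.length := by simpa [add_assoc] using hsum
  refine ⟨e, f, fun j => e + (y.take j).sum, by simp, ?_, ?_, by simpa using hsum', he, hf, ?_,
    hl, hr⟩
  · intro j _
    simp only [sum_take_succ']
    omega
  · refine monotone_nat_of_le_succ fun j => ?_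
    simp only [sum_take_succ']
    omega
  · intro i hi
    rw [hbd i hi]
    constructor
    · rintro ⟨j, hj⟩
      simp only [List.take_append, List.sum_append, List.take_replicate, List.sum_replicate,
        List.length_append, List.length_replicate, smul_eq_mul, mul_one] at hj
      -- A prefix reaching beyond `y` would have to be all of `x`.
      by_cases hjl : j ≤ e + y.length
      · refine ⟨j - e, by omega, ?_⟩
        have : min j e = e := by
          by_contra hne
          have : j = 0 := by omega
          subst this
          simp at hj
        omega
      · exfalso
        rw [List.take_of_length_le (by omega)] at hj
        omega
    · rintro ⟨j, hjl, hj⟩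
      refine ⟨e + j, ?_⟩
      simp only [List.take_append, List.sum_append, List.take_replicate, List.sum_replicate,
        List.length_append, List.length_replicate, smul_eq_mul, mul_one]
      rw [show e + j - e = j by omega]
      omega

/-! ### C∞-words -/

theorem IsCInf.derivative {x : List ℕ} (h : IsCInf 1 2 x) : IsCInf 1 2 (D 1 2 x) :=
  fun k => h (k + 1)

theorem IsCInf.letter {x : List ℕ} (h : IsCInf 1 2 x) {i : ℕ} (hi : i < x.length) :
    x.getD i 0 = 1 ∨ x.getD i 0 = 2 := by
  rw [List.getD_eq_getElem _ _ hi]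
  exact h 0 _ (List.getElem_mem hi)

theorem IsDer.locate {x y : List ℕ} {e f : ℕ} {T : ℕ → ℕ} (h : IsDer x y e f T) {t : ℕ}
    (h1 : e ≤ t) (h2 : t + f < x.length) : ∃ j < y.length, T j ≤ t ∧ t < T (j + 1) := by
  have key : ∀ n ≤ y.length, t < T n → ∃ j < n, T j ≤ t ∧ t < T (j + 1) := by
    intro n
    induction n with
    | zero => intro _ hn; have := h.zero; omega
    | succ n ih =>
      intro hn ht
      by_cases hlt : t < T n
      · obtain ⟨j, hj, hj'⟩ := ih (by omega) hlt
        exact ⟨j, by omega, hj'⟩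
      · exact ⟨n, by omega, by omega, ht⟩
  exact key _ le_rfl (by have := h.last; omega)

/-- A C∞-word has no factor `aaa`. -/
theorem no_triple {x : List ℕ} (h : IsCInf 1 2 x) {i : ℕ} (hi : i + 2 < x.length)
    (h1 : x.getD (i + 1) 0 = x.getD i 0) (h2 : x.getD (i + 2) 0 = x.getD (i + 1) 0) : False := by
  obtain ⟨e, f, T, hT⟩ := exists_isDer x
  have he := hT.he
  have hf := hT.hf
  obtain ⟨j, hj, hj1, hj2⟩ := hT.locate (t := i + 1) (by omega) (by omega)
  have hs := hT.step j hj
  have hl := h.derivative.letter hj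
  by_cases hji : T j = i + 1
  · exact (hT.bd i (by omega)).2 ⟨j, by omega, hji⟩ h1
  · exact (hT.bd (i + 1) (by omega)).2 ⟨j + 1, by omega, by omega⟩ h2

/-! ### The descent -/

/-- Consecutive run starts carry different letters. -/
theorem IsDer.alternate {x y : List ℕ} {e f : ℕ} {T : ℕ → ℕ} (h : IsDer x y e f T)
    (hy : ∀ j < y.length, y.getD j 0 = 1 ∨ y.getD j 0 = 2) {j : ℕ} (hj : j < y.length)
    (hL : T (j + 1) < x.length) : x.getD (T (j + 1)) 0 ≠ x.getD (T j) 0 := by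
  have hs := h.step j hj
  rcases hy j hj with h1 | h2
  · rw [hs, h1]
    rw [hs, h1] at hL
    exact (h.bd _ hL).2 ⟨j + 1, hj, by omega⟩
  · have hL' : T j + 1 + 1 < x.length := by omega
    have hne := (h.bd (T j + 1) hL').2 ⟨j + 1, hj, by omega⟩
    have heq : x.getD (T j + 1) 0 = x.getD (T j) 0 := by
      by_contra hcon
      obtain ⟨k, hk, hk'⟩ := (h.bd (T j) (by omega)).1 hcon
      rcases Nat.lt_or_ge j k with hjk | hjk
      · have := h.mono (show j + 1 ≤ k by omega)
        omega
      · have := h.mono hjk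
        omega
    rw [hs, h2, ← heq]
    exact hne

/-- If `x` has period `p`, then some number `q` of runs of `x` spans exactly `p` letters, from the start
of any recorded run; as `x` is binary, `q` is even. -/
theorem exists_period {x y : List ℕ} {e f p : ℕ} {T : ℕ → ℕ} (h : IsDer x y e f T)
    (hx : ∀ i < x.length, x.getD i 0 = 1 ∨ x.getD i 0 = 2)
    (hy : ∀ j < y.length, y.getD j 0 = 1 ∨ y.getD j 0 = 2)
    (hp : 1 ≤ p) (hper : ∀ i, i + p < x.length → x.getD (i + p) 0 = x.getD i 0)
    (hlen : p + 2 < x.length) :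
    ∃ q ≤ y.length, Even q ∧ ∀ j, j + q ≤ y.length → T (j + q) = T j + p := by
  have he := h.he
  have hf := h.hf
  have h0 := h.zero
  have hlast := h.last
  -- Letter changes are invariant under the shift by `p`.
  have shift : ∀ i, i + p + 1 < x.length →
      ((∃ j ≤ y.length, T j = i + p + 1) ↔ ∃ j ≤ y.length, T j = i + 1) := by
    intro i hi
    rw [← h.bd _ hi, ← h.bd i (by omega), hper i (by omega),
      show i + p + 1 = (i + 1) + p by omega, hper (i + 1) (by omega)]
  have notBetween : ∀ j < y.length, ∀ k, T j < T k → T k < T (j + 1) → False := by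
    intro j _ k h1 h2
    rcases Nat.lt_or_ge j k with hjk | hjk
    · have := h.mono (show j + 1 ≤ k by omega)
      omega
    · have := h.mono hjk
      omega
  obtain ⟨q, hq, hTq⟩ : ∃ q ≤ y.length, T q = e + p := by
    rcases Nat.eq_zero_or_pos e with he0 | hepos
    · obtain ⟨j, hj, hj1, hj2⟩ := h.locate (t := p) (by omega) (by omega)
      by_cases hjp : T j = p
      · exact ⟨j, by omega, by omega⟩
      · exfalso
        have hs := h.step j hj
        have hj' : T (j + 1) = p + 1 := by have := hy j hj; omega
        obtain ⟨k, hk, hk'⟩ := (shift 0 (by omega)).1 ⟨j + 1, hj, by omega⟩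
        have hs0 := h.step 0 (by omega)
        have := h.left he0 (by omega)
        exact notBetween 0 (by omega) k (by omega) (by rw [hs0]; omega)
    · obtain rfl : e = 1 := by omega
      by_cases hne : ∃ j ≤ y.length, T j = 0 + 1
      · obtain ⟨k, hk, hk'⟩ := (shift 0 (by omega)).2 hne
        exact ⟨k, hk, by omega⟩
      · exact absurd ⟨0, by omega, by omega⟩ hne
  have hT : ∀ j, j + q ≤ y.length → T (j + q) = T j + p := by
    intro j
    induction j with
    | zero => intro _; rw [Nat.zero_add]; omega
    | succ j ih =>
      intro hj
      have ihj := ih (by omega)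
      have hs := h.step j (by omega)
      have hs' := h.step (j + q) (by omega)
      have hle := h.mono hj
      rw [show j + 1 + q = j + q + 1 by omega] at hle ⊢
      rcases hy j (by omega) with h1 | h2 <;> rcases hy (j + q) (by omega) with h3 | h4
      · omega
      · exfalso
        obtain ⟨k, hk, hk'⟩ := (shift (T j) (by omega)).2 ⟨j + 1, by omega, by omega⟩
        exact notBetween (j + q) (by omega) k (by omega) (by omega)
      · exfalso
        by_cases hL : T j + p + 1 < x.length
        · obtain ⟨k, hk, hk'⟩ := (shift (T j) hL).1 ⟨j + q + 1, by omega, by omega⟩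
          exact notBetween j (by omega) k (by omega) (by omega)
        · -- Only the final run of `x` can be cut short, and a final run of length one is dropped.
          have hlen' : y.length = j + q + 1 := by
            by_contra hne
            have hs'' := h.step (j + q + 1) (by omega)
            have := hy (j + q + 1) (by omega)
            have := h.mono (show j + q + 1 + 1 ≤ y.length by omega)
            omega
          rw [← hlen'] at hs'
          have := h.right (by omega) (by omega)
          rw [show y.length - 1 = j + q by omega] at this
          omega
      · omega
  refine ⟨q, hq, ?_, hT⟩
  have alt : ∀ j ≤ q, (Even j ↔ x.getD (T j) 0 = x.getD (T 0) 0) := by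
    intro j
    induction j with
    | zero => simp
    | succ j ih =>
      intro hj
      have hle := h.mono hj
      have hle' := h.mono (show j ≤ q by omega)
      have hle0 := h.mono (show 0 ≤ q by omega)
      have hne := h.alternate hy (show j < y.length by omega) (by omega)
      rw [Nat.even_add_one, ih (by omega)]
      have a1 := hx (T (j + 1)) (by omega)
      have a2 := hx (T j) (by omega)
      have a3 := hx (T 0) (by omega)
      omega
  rw [alt q le_rfl, hTq, h0]
  exact hper e (by omega)

/-- A C∞-word with period `p ≥ 4` is shorter than `3 * p - 5`. -/
theorem no_long_period (p : ℕ) : ∀ x : List ℕ, IsCInf 1 2 x → 4 ≤ p → 3 * p ≤ x.length + 5 →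
    (∀ i, i + p < x.length → x.getD (i + p) 0 = x.getD i 0) → False := by
  induction p using Nat.strong_induction_on with
  | _ p ih =>
  intro x hx hp hlen hper
  obtain ⟨e, f, T, h⟩ := exists_isDer x
  have hy := hx.derivative
  generalize D 1 2 x = y at *
  have hyl : ∀ j < y.length, y.getD j 0 = 1 ∨ y.getD j 0 = 2 := fun j hj => hy.letter hj
  obtain ⟨q, hq, ⟨r, hr⟩, hT⟩ :=
    exists_period h (fun i hi => hx.letter hi) hyl (by omega) hper (by omega)
  have he := h.he
  have hf := h.hf
  have h0 := h.zero
  have hlast := h.last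
  have hTq := hT 0 (by omega)
  rw [Nat.zero_add] at hTq
  have hgrow : ∀ k j, j + k ≤ y.length → T j + k ≤ T (j + k) ∧ T (j + k) ≤ T j + 2 * k := by
    intro k
    induction k with
    | zero => intro j _; simp
    | succ k ihk =>
      intro j hj
      have := ihk j (by omega)
      have := h.step (j + k) (by omega)
      have := hyl (j + k) (by omega)
      rw [← Nat.add_assoc j k 1] at hj ⊢
      omega
  have hpery : ∀ j, j + q < y.length → y.getD (j + q) 0 = y.getD j 0 := by
    intro j hj
    have a1 := hT j (by omega)
    have a2 := hT (j + 1) (by omega)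
    have a3 := h.step j (by omega)
    have a4 := h.step (j + q) (by omega)
    rw [show j + 1 + q = j + q + 1 by omega] at a2
    omega
  have hql : q < y.length := by
    by_contra hcon
    have : q = y.length := by omega
    subst this
    omega
  have hg := hgrow q 0 (by omega)
  rw [Nat.zero_add] at hg
  have trip : ∀ i a, i + 2 < y.length → y.getD i 0 = a → y.getD (i + 1) 0 = a →
      y.getD (i + 2) 0 = a → False := by
    intro i a hi h1 h2 h3
    exact no_triple hy hi (by omega) (by omega)
  -- Two runs per period would have length two each, and `y` would contain `222`.
  have hq4 : 4 ≤ q := by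
    by_contra hcon
    obtain rfl : q = 2 := by omega
    have a0 := h.step 0 (by omega)
    have a1 := h.step 1 (by omega)
    have b0 := hyl 0 (by omega)
    have b1 := hyl 1 (by omega)
    have b2 := hpery 0 (by omega)
    simp only [Nat.zero_add] at a0 a1 b2
    simp only [Nat.reduceAdd] at a1
    exact trip 0 2 (by omega) (by omega) (by simp only [Nat.zero_add]; omega)
      (by simp only [Nat.zero_add]; omega)
  -- One letter per run would produce `111` in `y`.
  have hqp : q < p := by
    by_contra hcon
    have a0 := h.step 0 (by omega)
    have a1 := h.step 1 (by omega)
    have a2 := h.step 2 (by omega)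
    have b0 := hyl 0 (by omega)
    have b1 := hyl 1 (by omega)
    have b2 := hyl 2 (by omega)
    have hg3 := hgrow (q - 3) 3 (by omega)
    rw [show 3 + (q - 3) = q by omega] at hg3
    simp only [Nat.zero_add, Nat.reduceAdd] at a0 a1 a2
    exact trip 0 1 (by omega) (by omega) (by simp only [Nat.zero_add]; omega)
      (by simp only [Nat.zero_add]; omega)
  refine ih q hqp y hy hq4 ?_ hpery
  by_contra hshort
  by_cases h2q : 2 * q ≤ y.length
  · -- The six letters of `y` from position `s` on have sum at most seven.
    obtain ⟨s, hs⟩ : ∃ s, y.length = s + q + q := ⟨y.length - 2 * q, by omega⟩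
    have a1 := hT s (by omega)
    have a2 := hT (s + q) (by omega)
    rw [← hs] at a2
    have hg6 := hgrow (q - (s + 6)) (s + 6) (by omega)
    rw [show s + 6 + (q - (s + 6)) = q by omega] at hg6
    have c0 := h.step s (by omega)
    have c1 := h.step (s + 1) (by omega)
    have c2 := h.step (s + 2) (by omega)
    have c3 := h.step (s + 3) (by omega)
    have c4 := h.step (s + 4) (by omega)
    have c5 := h.step (s + 5) (by omega)
    have d0 := hyl s (by omega)
    have d1 := hyl (s + 1) (by omega)
    have d2 := hyl (s + 2) (by omega)
    have d3 := hyl (s + 3) (by omega)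
    have d4 := hyl (s + 4) (by omega)
    have d5 := hyl (s + 5) (by omega)
    simp only [Nat.add_assoc, Nat.reduceAdd] at c0 c1 c2 c3 c4 c5
    by_cases hc : y.getD s 0 = 1 ∧ y.getD (s + 1) 0 = 1 ∧ y.getD (s + 2) 0 = 1
    · exact trip s 1 (by omega) hc.1 hc.2.1 hc.2.2
    · exact trip (s + 3) 1 (by omega) (by omega) (by simp only [Nat.add_assoc, Nat.reduceAdd]; omega)
        (by simp only [Nat.add_assoc, Nat.reduceAdd]; omega)
  · -- Here `p = 5`, `q = 4` and `y` has length six, with a single `2` in each period.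
    obtain ⟨s, hs⟩ : ∃ s, y.length = s + q := ⟨y.length - q, by omega⟩
    have a1 := hT s (by omega)
    rw [← hs] at a1
    have hg1 := hgrow (q - s) s (by omega)
    rw [show s + (q - s) = q by omega] at hg1
    have hg2 := hgrow s 0 (by omega)
    rw [Nat.zero_add] at hg2
    obtain rfl : q = 4 := by omega
    obtain rfl : s = 2 := by omega
    have c0 := h.step 0 (by omega)
    have c1 := h.step 1 (by omega)
    have c2 := h.step 2 (by omega)
    have c3 := h.step 3 (by omega)
    have d0 := hyl 0 (by omega)
    have d1 := hyl 1 (by omega)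
    have d2 := hyl 2 (by omega)
    have d3 := hyl 3 (by omega)
    have d4 := hpery 0 (by omega)
    simp only [Nat.zero_add, Nat.reduceAdd] at c0 c1 c2 c3 d4
    rcases d1 with d1 | d1
    · exact trip 1 1 (by omega) d1 (by simp only [Nat.reduceAdd]; omega)
        (by simp only [Nat.reduceAdd]; omega)
    · exact trip 2 1 (by omega) (by omega) (by simp only [Nat.reduceAdd]; omega)
        (by simp only [Nat.reduceAdd]; omega)

/-- The C∞-words over {1,2} are cube-free. -/
theorem cube_free : ¬ ∃ w : List ℕ, w ≠ [] ∧ IsCInf 1 2 (w ++ w ++ w) := by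
  rintro ⟨w, hw, h⟩
  by_cases h4 : 4 ≤ w.length
  · refine no_long_period w.length _ h h4 (by simp; omega) ?_
    intro i hi
    rw [List.append_assoc] at hi ⊢
    simp only [List.length_append] at hi
    rw [List.getD_append_right _ _ _ _ (by omega), Nat.add_sub_cancel, ← List.append_assoc w w w,
      List.getD_append (w ++ w) w _ _ (by simp only [List.length_append]; omega)]
  · have hk : ∀ k, ∀ a ∈ (D 1 2)^[k] (w ++ w ++ w), a = 1 ∨ a = 2 := h
    have h0 : ∀ a ∈ w, a = 1 ∨ a = 2 := fun a ha => hk 0 a (by simp [ha])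
    have h1 := hk 1
    have h2 := hk 2
    have h3 := hk 3
    clear h hk
    rcases w with _ | ⟨a, _ | ⟨b, _ | ⟨c, _ | ⟨d, w⟩⟩⟩⟩
    · exact hw rfl
    · rcases h0 a (by simp) with rfl | rfl <;> revert h1 <;> decide
    · rcases h0 a (by simp) with rfl | rfl <;> rcases h0 b (by simp) with rfl | rfl <;>
        revert h1 h2 <;> decide
    · rcases h0 a (by simp) with rfl | rfl <;> rcases h0 b (by simp) with rfl | rfl <;>
        rcases h0 c (by simp) with rfl | rfl <;> revert h1 h2 h3 <;> decide
    · simp at h4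

end Kola
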